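/- arXiv:2508.06241 — 7 statements merged into one kernel-verified Lean document; each statement's English description precedes it below -/
import Mathlib

section
/- Let E_i and E_e be symmetric real 3×3 matrices satisfying the transmission conditions: E_e − E_i = (δ⊗n + n⊗δ)/2 for some vector δ ∈ ℝ³, and ℂᵉ E_e n = ℂⁱ E_i n. Then (ℂᵉ − ℂⁱ) E_i = 𝕄 E_e. -/
open Matrix

/-- Symmetric part of a matrix. -/
noncomputable def symPart (A : Matrix (Fin 3) (Fin 3) ℝ) : Matrix (Fin 3) (Fin 3) ℝ :=
  (1 / 2 : ℝ) • (A + Aᵀ)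

/-- Isotropic elasticity tensor with Lamé parameters `lam`, `mu`:
`ℂ A = 2μ Â + λ (tr A) I₃`. -/
noncomputable def elastC (lam mu : ℝ) (A : Matrix (Fin 3) (Fin 3) ℝ) :
    Matrix (Fin 3) (Fin 3) ℝ :=
  (2 * mu) • symPart A + (lam * A.trace) • (1 : Matrix (Fin 3) (Fin 3) ℝ)

/-- The difference tensor `ℂᵉ − ℂⁱ` applied to `A`. -/
noncomputable def Cdiff (lami mui lame mue : ℝ) (A : Matrix (Fin 3) (Fin 3) ℝ) :
    Matrix (Fin 3) (Fin 3) ℝ :=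
  elastC lame mue A - elastC lami mui A

/-- `Q` is the inverse of the positive definite matrix `μⁱI₃ + (λⁱ+μⁱ) n⊗n`. -/
noncomputable def Qmat (lami mui : ℝ) (n : Fin 3 → ℝ) : Matrix (Fin 3) (Fin 3) ℝ :=
  (mui • (1 : Matrix (Fin 3) (Fin 3) ℝ) + (lami + mui) • vecMulVec n n)⁻¹

/-- The elastic moment tensor
`𝕄A = (ℂᵉ−ℂⁱ)A + (ℂᵉ−ℂⁱ)[(Q((ℂᵉ−ℂⁱ)A n))⊗n]`. -/
noncomputable def emt (lami mui lame mue : ℝ) (n : Fin 3 → ℝ)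
    (A : Matrix (Fin 3) (Fin 3) ℝ) : Matrix (Fin 3) (Fin 3) ℝ :=
  Cdiff lami mui lame mue A +
    Cdiff lami mui lame mue
      (vecMulVec ((Qmat lami mui n).mulVec ((Cdiff lami mui lame mue A).mulVec n)) n)

/-- Transmission conditions across a flat interface imply `(ℂᵉ − ℂⁱ) E_i = 𝕄 E_e`. -/
theorem transmission_gives_moment_tensor (lami mui lame mue : ℝ)
    (hmui : mui > 0) (hsum : lami + mui > 0)
    (n : Fin 3 → ℝ) (hn : n ⬝ᵥ n = 1)
    (Ei Ee : Matrix (Fin 3) (Fin 3) ℝ) (hEi : Ei.IsSymm) (hEe : Ee.IsSymm)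
    (δ : Fin 3 → ℝ)
    (hjump : Ee - Ei = (1 / 2 : ℝ) • (vecMulVec δ n + vecMulVec n δ))
    (htrans : (elastC lame mue Ee).mulVec n = (elastC lami mui Ei).mulVec n) :
    Cdiff lami mui lame mue Ei = emt lami mui lame mue n Ee := by
  have hn' : n 0 * n 0 + n 1 * n 1 + n 2 * n 2 = 1 := by
    simpa [dotProduct, Fin.sum_univ_three] using hn
  set P : Matrix (Fin 3) (Fin 3) ℝ :=
    mui • (1 : Matrix (Fin 3) (Fin 3) ℝ) + (lami + mui) • vecMulVec n n with hP
  have hdet : P.det = mui ^ 2 * (mui + (lami + mui)) := by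
    have : P.det = mui ^ 2 * (mui + (lami + mui) * (n 0 * n 0 + n 1 * n 1 + n 2 * n 2)) := by
      rw [hP, Matrix.det_fin_three]
      simp [vecMulVec_apply, Matrix.one_apply]
      ring
    rw [this, hn', mul_one]
  have hunit : IsUnit P.det := by
    rw [hdet]
    exact (by positivity : mui ^ 2 * (mui + (lami + mui)) ≠ 0).isUnit
  have hEe' : Ee = Ei + (1 / 2 : ℝ) • (vecMulVec δ n + vecMulVec n δ) := by
    rw [← hjump]; abel
  have key : (Cdiff lami mui lame mue Ee).mulVec n = P.mulVec (-δ) := by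
    have h1 : (elastC lami mui Ei).mulVec n = (elastC lami mui Ee).mulVec n - P.mulVec δ := by
      rw [hEe', hP]
      ext i
      fin_cases i <;>
        simp [elastC, symPart, mulVec, dotProduct, Fin.sum_univ_three, vecMulVec_apply,
          Matrix.trace, Matrix.one_apply]
      · linear_combination (-mui * δ 0) * hn'
      · linear_combination (-mui * δ 1) * hn'
      · linear_combination (-mui * δ 2) * hn'
    rw [Cdiff, sub_mulVec, htrans, h1, mulVec_neg]
    abel
  have hQ : (Qmat lami mui n).mulVec ((Cdiff lami mui lame mue Ee).mulVec n) = -δ := by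
    rw [key, Qmat, ← hP, mulVec_mulVec, nonsing_inv_mul _ hunit, one_mulVec]
  rw [emt, hQ, hEe']
  ext i j
  simp [Cdiff, elastC, symPart, Fin.sum_univ_three, vecMulVec_apply, Matrix.trace]
  ring
end

section
/- The elastic moment tensor 𝕄 has the major symmetry: for all symmetric real 3×3 matrices A and B, 𝕄A · B = A · 𝕄B. -/
open Matrix

/-- Frobenius inner product of real 3×3 matrices. -/
def frob (A B : Matrix (Fin 3) (Fin 3) ℝ) : ℝ := ∑ i, ∑ j, A i j * B i j

theorem frob_Cdiff (a b c d : ℝ) (X Y : Matrix (Fin 3) (Fin 3) ℝ) :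
    frob (Cdiff a b c d X) Y = frob X (Cdiff a b c d Y) := by
  simp [frob, Cdiff, elastC, symPart, Fin.sum_univ_three, Matrix.trace, Matrix.one_apply]
  ring

theorem frob_comm' (X Y : Matrix (Fin 3) (Fin 3) ℝ) : frob X Y = frob Y X := by
  simp [frob, mul_comm]

theorem frob_add_left (X Y Z : Matrix (Fin 3) (Fin 3) ℝ) :
    frob (X + Y) Z = frob X Z + frob Y Z := by
  simp [frob, add_mul, Finset.sum_add_distrib]

theorem frob_vec (u n : Fin 3 → ℝ) (Z : Matrix (Fin 3) (Fin 3) ℝ) :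
    frob (vecMulVec u n) Z = u ⬝ᵥ (Z *ᵥ n) := by
  simp [frob, vecMulVec_apply, dotProduct, mulVec, Fin.sum_univ_three]
  ring

theorem Qmat_symm (a b : ℝ) (n : Fin 3 → ℝ) : (Qmat a b n)ᵀ = Qmat a b n := by
  unfold Qmat
  rw [Matrix.transpose_nonsing_inv]
  simp [Matrix.transpose_vecMulVec]

/-- Major symmetry of the elastic moment tensor: `𝕄A · B = A · 𝕄B` for all
symmetric matrices `A`, `B`. -/
theorem emt_major_symmetry (lami mui lame mue : ℝ)
    (hmui : mui > 0) (hsum : lami + mui > 0)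
    (n : Fin 3 → ℝ) (hn : n ⬝ᵥ n = 1)
    (A B : Matrix (Fin 3) (Fin 3) ℝ) (hA : A.IsSymm) (hB : B.IsSymm) :
    frob (emt lami mui lame mue n A) B = frob A (emt lami mui lame mue n B) := by
  rw [frob_comm' A]
  unfold emt
  rw [frob_add_left, frob_add_left, frob_comm' (Cdiff lami mui lame mue A) B, ← frob_Cdiff _ _ _ _ B A,
    frob_Cdiff _ _ _ _ (vecMulVec _ _) B,
    frob_Cdiff _ _ _ _ (vecMulVec _ _) A, frob_vec, frob_vec]
  congr 1
  generalize Cdiff lami mui lame mue A *ᵥ n = x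
  generalize Cdiff lami mui lame mue B *ᵥ n = y
  rw [dotProduct_comm (Qmat lami mui n *ᵥ x) y, dotProduct_mulVec, ← mulVec_transpose, Qmat_symm]
end

section
/- Let λ, μ ∈ ℝ, set ℂ = ℂ_{λ,μ}, and let Ω ⊆ ℝ³ be open. Let u, v : Ω → ℝ³ be twice continuously differentiable and satisfy the homogeneous Lamé system div(ℂ∇u) = 0 and div(ℂ∇v) = 0 on Ω, i.e. componentwise Σ_j ∂_j ((ℂ∇u)_{ij}) = 0 for i = 1,2,3, where (∇u)_{ij} = ∂u_i/∂x_j is the Jacobian matrix. Let 𝒰 : Ω → ℝ³ be continuously differentiable with Jacobian matrix D𝒰. Define the vector field b = (ℂ∇u · ∇v) 𝒰 − (ℂ∇u)(∇v · 𝒰) − (ℂ∇v)(∇u · 𝒰), where a matrix applied to a vector is the matrix-vector product. Then at every point of Ω, div b = (div 𝒰)(ℂ∇u · ∇v) − ℂ∇u · (∇v · D𝒰) − ℂ∇v · (∇u · D𝒰), where the products of matrices are the usual matrix products and div b = Σ_i ∂_i b_i. -/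
open Matrix

/-- Partial derivative `∂f/∂x_j` of a scalar function on `ℝ³`. -/
noncomputable def pd (f : (Fin 3 → ℝ) → ℝ) (j : Fin 3) (x : Fin 3 → ℝ) : ℝ :=
  fderiv ℝ f x (Pi.single j 1)

/-- Jacobian matrix `(∇u)_{ij} = ∂u_i/∂x_j` of a vector field on `ℝ³`. -/
noncomputable def jac (u : (Fin 3 → ℝ) → Fin 3 → ℝ) (x : Fin 3 → ℝ) :
    Matrix (Fin 3) (Fin 3) ℝ :=
  Matrix.of fun i j => pd (fun y => u y i) j x

theorem pd_add' {f g : (Fin 3 → ℝ) → ℝ} {x} (j : Fin 3) (hf : DifferentiableAt ℝ f x)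
    (hg : DifferentiableAt ℝ g x) : pd (fun y => f y + g y) j x = pd f j x + pd g j x := by
  simp [pd, fderiv_fun_add hf hg]

theorem pd_sub' {f g : (Fin 3 → ℝ) → ℝ} {x} (j : Fin 3) (hf : DifferentiableAt ℝ f x)
    (hg : DifferentiableAt ℝ g x) : pd (fun y => f y - g y) j x = pd f j x - pd g j x := by
  simp [pd, fderiv_fun_sub hf hg]

theorem pd_mul' {f g : (Fin 3 → ℝ) → ℝ} {x} (j : Fin 3) (hf : DifferentiableAt ℝ f x)
    (hg : DifferentiableAt ℝ g x) :
    pd (fun y => f y * g y) j x = pd f j x * g x + f x * pd g j x := by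
  simp [pd, fderiv_fun_mul hf hg]; ring

theorem pd_const' (c : ℝ) {x} (j : Fin 3) : pd (fun _ => c) j x = 0 := by
  simp [pd]

theorem pd_sum' {f : Fin 3 → (Fin 3 → ℝ) → ℝ} {x} (j : Fin 3)
    (hf : ∀ i, DifferentiableAt ℝ (f i) x) :
    pd (fun y => ∑ i, f i y) j x = ∑ i, pd (f i) j x := by
  simp [pd, fderiv_fun_sum (fun i _ => hf i)]

theorem elastC_apply (lam mu : ℝ) (A : Matrix (Fin 3) (Fin 3) ℝ) (i j : Fin 3) :
    elastC lam mu A i j = mu * (A i j + A j i) + (lam * (if i = j then 1 else 0)) * ∑ l, A l l := by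
  simp [elastC, symPart, Matrix.one_apply, Matrix.trace]; ring

theorem jac_facts {u : (Fin 3 → ℝ) → Fin 3 → ℝ} {x} (hu : ContDiffAt ℝ 2 u x) :
    (∀ i j, DifferentiableAt ℝ (fun y => jac u y i j) x) ∧
    ∀ i j k, pd (fun y => jac u y i j) k x = pd (fun y => jac u y i k) j x := by
  have hi : ∀ i, ContDiffAt ℝ 2 (fun y => u y i) x := fun i => contDiffAt_pi.1 hu i
  have hd : ∀ i, DifferentiableAt ℝ (fderiv ℝ (fun y => u y i)) x := fun i =>
    ((hi i).fderiv_right (m := 1) (by norm_num)).differentiableAt (by norm_num)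
  constructor
  · intro i j
    exact (hd i).clm_apply (differentiableAt_const _)
  · intro i j k
    have h := (hi i).isSymmSndFDerivAt (by simp)
    have e : ∀ j k, pd (fun y => jac u y i j) k x =
        fderiv ℝ (fderiv ℝ (fun y => u y i)) x (Pi.single k 1) (Pi.single j 1) := by
      intro j k
      simp only [pd, jac, Matrix.of_apply]
      rw [fderiv_clm_apply (hd i) (differentiableAt_const _)]
      simp
    rw [e, e]
    exact h _ _

theorem alg (lam mu : ℝ) (a b : Fin 3 → Fin 3 → Fin 3 → ℝ) (A B P Q W : Fin 3 → Fin 3 → ℝ)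
    (U : Fin 3 → ℝ) (p q : Fin 3 → Fin 3 → Fin 3 → ℝ)
    (sa : ∀ i j k, a i j k = a i k j) (sb : ∀ i j k, b i j k = b i k j)
    (hP : ∀ i j, P i j = mu * (A i j + A j i) + (lam * (if i = j then 1 else 0)) * ∑ l, A l l)
    (hQ : ∀ i j, Q i j = mu * (B i j + B j i) + (lam * (if i = j then 1 else 0)) * ∑ l, B l l)
    (hp : ∀ i j k, p i j k =
      mu * (a i j k + a j i k) + (lam * (if i = j then 1 else 0)) * ∑ l, a l l k)
    (hq : ∀ i j k, q i j k =
      mu * (b i j k + b j i k) + (lam * (if i = j then 1 else 0)) * ∑ l, b l l k)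
    (hu : ∀ i, ∑ j, p i j j = 0) (hv : ∀ i, ∑ j, q i j j = 0) :
    ∑ i, ((∑ k, ∑ l, (p k l i * B k l + P k l * b k l i)) * U i + (∑ k, ∑ l, P k l * B k l) * W i i
      - ∑ k, (p i k i * ∑ l, B k l * U l + P i k * ∑ l, (b k l i * U l + B k l * W l i))
      - ∑ k, (q i k i * ∑ l, A k l * U l + Q i k * ∑ l, (a k l i * U l + A k l * W l i)))
    = (∑ i, W i i) * (∑ k, ∑ l, P k l * B k l)
      - (∑ i, ∑ j, P i j * ∑ l, B i l * W l j) - (∑ i, ∑ j, Q i j * ∑ l, A i l * W l j) := by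
  have sP : ∀ i j, P i j = P j i := fun i j => by rw [hP, hP]; simp [eq_comm]; left; ring
  have sQ : ∀ i j, Q i j = Q j i := fun i j => by rw [hQ, hQ]; simp [eq_comm]; left; ring
  have sp : ∀ i j k, p i j k = p j i k := fun i j k => by rw [hp, hp]; simp [eq_comm]; left; ring
  have sq : ∀ i j k, q i j k = q j i k := fun i j k => by rw [hq, hq]; simp [eq_comm]; left; ring
  have key : ∀ i, ∑ k, ∑ l, p k l i * B k l = ∑ k, ∑ l, Q k l * a k l i := by
    intro i
    simp only [hp, hQ, Fin.sum_univ_three]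
    simp
    ring
  have key' : ∀ i, ∑ k, ∑ l, (p k l i * B k l + P k l * b k l i)
      = ∑ k, ∑ l, Q k l * a k l i + ∑ k, ∑ l, P k l * b k l i := by
    intro i; simp only [Finset.sum_add_distrib, key]
  simp only [key']
  clear key key' hP hQ hp hq
  have e1 := hu 0
  have e2 := hu 1
  have e3 := hu 2
  have f1 := hv 0
  have f2 := hv 1
  have f3 := hv 2
  simp only [Fin.sum_univ_three] at *
  rw [sp 0 1 1, sp 0 2 2] at e1
  rw [sp 1 2 2, sp 1 0 0] at e2
  rw [sp 2 0 0, sp 2 1 1] at e3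
  rw [sq 0 1 1, sq 0 2 2] at f1
  rw [sq 1 2 2, sq 1 0 0] at f2
  rw [sq 2 0 0, sq 2 1 1] at f3
  simp only [sP 1 0, sP 2 0, sP 2 1, sQ 1 0, sQ 2 0, sQ 2 1]
  simp only [sa _ 1 0, sa _ 2 0, sa _ 2 1, sb _ 1 0, sb _ 2 0, sb _ 2 1]
  linear_combination (-(B 0 0 * U 0 + B 0 1 * U 1 + B 0 2 * U 2)) * e1
    - (B 1 0 * U 0 + B 1 1 * U 1 + B 1 2 * U 2) * e2
    - (B 2 0 * U 0 + B 2 1 * U 1 + B 2 2 * U 2) * e3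
    - (A 0 0 * U 0 + A 0 1 * U 1 + A 0 2 * U 2) * f1
    - (A 1 0 * U 0 + A 1 1 * U 1 + A 1 2 * U 2) * f2
    - (A 2 0 * U 0 + A 2 1 * U 1 + A 2 2 * U 2) * f3

theorem elast_facts (lam mu : ℝ) {u : (Fin 3 → ℝ) → Fin 3 → ℝ} {x}
    (h : ∀ i j, DifferentiableAt ℝ (fun y => jac u y i j) x) :
    (∀ i j, DifferentiableAt ℝ (fun y => elastC lam mu (jac u y) i j) x) ∧
    ∀ i j k, pd (fun y => elastC lam mu (jac u y) i j) k x =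
      mu * (pd (fun y => jac u y i j) k x + pd (fun y => jac u y j i) k x)
      + (lam * (if i = j then 1 else 0)) * ∑ l, pd (fun y => jac u y l l) k x := by
  have hs : DifferentiableAt ℝ (fun y => ∑ l, jac u y l l) x :=
    DifferentiableAt.fun_sum (fun l _ => h l l)
  simp only [elastC_apply]
  refine ⟨fun i j => (((h i j).fun_add (h j i)).const_mul _).fun_add (hs.const_mul _), fun i j k => ?_⟩
  rw [pd_add' k (((h i j).fun_add (h j i)).const_mul _) (hs.const_mul _),
    pd_mul' k (differentiableAt_const _) ((h i j).fun_add (h j i)),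
    pd_mul' k (differentiableAt_const _) hs, pd_add' k (h i j) (h j i),
    pd_sum' k (fun l => h l l), pd_const', pd_const']
  ring

/-- If `u`, `v` solve the homogeneous Lamé system `div(ℂ∇u) = 0 = div(ℂ∇v)` on an open
set `Ω` and `𝒰` is `C¹`, then the field
`b = (ℂ∇u · ∇v) 𝒰 − (ℂ∇u)(∇v 𝒰) − (ℂ∇v)(∇u 𝒰)` satisfies
`div b = (div 𝒰)(ℂ∇u · ∇v) − ℂ∇u · (∇v D𝒰) − ℂ∇v · (∇u D𝒰)` on `Ω`. -/
theorem div_of_b_identity (lam mu : ℝ) (Ω : Set (Fin 3 → ℝ)) (hΩ : IsOpen Ω)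
    (u v 𝒰 : (Fin 3 → ℝ) → Fin 3 → ℝ)
    (hu : ContDiffOn ℝ 2 u Ω) (hv : ContDiffOn ℝ 2 v Ω)
    (hU : ContDiffOn ℝ 1 𝒰 Ω)
    (hlameu : ∀ x ∈ Ω, ∀ i, ∑ j, pd (fun y => elastC lam mu (jac u y) i j) j x = 0)
    (hlamev : ∀ x ∈ Ω, ∀ i, ∑ j, pd (fun y => elastC lam mu (jac v y) i j) j x = 0)
    (x : Fin 3 → ℝ) (hx : x ∈ Ω) :
    (∑ i, pd (fun y =>
        (frob (elastC lam mu (jac u y)) (jac v y) • 𝒰 y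
          - (elastC lam mu (jac u y)).mulVec ((jac v y).mulVec (𝒰 y))
          - (elastC lam mu (jac v y)).mulVec ((jac u y).mulVec (𝒰 y))) i) i x)
      = (∑ i, pd (fun y => 𝒰 y i) i x) * frob (elastC lam mu (jac u x)) (jac v x)
        - frob (elastC lam mu (jac u x)) (jac v x * jac 𝒰 x)
        - frob (elastC lam mu (jac v x)) (jac u x * jac 𝒰 x) := by
  obtain ⟨da, sa⟩ := jac_facts (hu.contDiffAt (hΩ.mem_nhds hx))
  obtain ⟨db, sb⟩ := jac_facts (hv.contDiffAt (hΩ.mem_nhds hx))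
  obtain ⟨dP, hp⟩ := elast_facts lam mu da
  obtain ⟨dQ, hq⟩ := elast_facts lam mu db
  have dU : ∀ i, DifferentiableAt ℝ (fun y => 𝒰 y i) x :=
    differentiableAt_pi.1 ((hU.contDiffAt (hΩ.mem_nhds hx)).differentiableAt (by norm_num))
  have main := alg lam mu (fun i j k => pd (fun y => jac u y i j) k x)
    (fun i j k => pd (fun y => jac v y i j) k x) (jac u x) (jac v x)
    (elastC lam mu (jac u x)) (elastC lam mu (jac v x)) (jac 𝒰 x) (𝒰 x)
    (fun i j k => pd (fun y => elastC lam mu (jac u y) i j) k x)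
    (fun i j k => pd (fun y => elastC lam mu (jac v y) i j) k x) sa sb
    (elastC_apply lam mu _) (elastC_apply lam mu _) hp hq (hlameu x hx) (hlamev x hx)
  simp only [frob, Matrix.mul_apply]
  refine Eq.trans (Finset.sum_congr rfl fun i _ => ?_) main
  simp only [Pi.sub_apply, Pi.smul_apply, smul_eq_mul, Matrix.mulVec, dotProduct]
  have dS : DifferentiableAt ℝ (fun y => ∑ k, ∑ l, elastC lam mu (jac u y) k l * jac v y k l) x :=
    DifferentiableAt.fun_sum fun k _ => DifferentiableAt.fun_sum fun l _ =>
      (dP k l).fun_mul (db k l)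
  have d1 : ∀ k, DifferentiableAt ℝ (fun y => ∑ l, jac v y k l * 𝒰 y l) x := fun k =>
    DifferentiableAt.fun_sum fun l _ => (db k l).fun_mul (dU l)
  have d2 : ∀ k, DifferentiableAt ℝ (fun y => ∑ l, jac u y k l * 𝒰 y l) x := fun k =>
    DifferentiableAt.fun_sum fun l _ => (da k l).fun_mul (dU l)
  have d3 : DifferentiableAt ℝ
      (fun y => ∑ k, elastC lam mu (jac u y) i k * ∑ l, jac v y k l * 𝒰 y l) x :=
    DifferentiableAt.fun_sum fun k _ => (dP i k).fun_mul (d1 k)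
  have d4 : DifferentiableAt ℝ
      (fun y => ∑ k, elastC lam mu (jac v y) i k * ∑ l, jac u y k l * 𝒰 y l) x :=
    DifferentiableAt.fun_sum fun k _ => (dQ i k).fun_mul (d2 k)
  have e1 : ∀ k, pd (fun y => ∑ l, jac v y k l * 𝒰 y l) i x
      = ∑ l, (pd (fun y => jac v y k l) i x * 𝒰 x l + jac v x k l * jac 𝒰 x l i) := fun k => by
    rw [pd_sum' i fun l => (db k l).fun_mul (dU l)]
    exact Finset.sum_congr rfl fun l _ => pd_mul' i (db k l) (dU l)
  have e2 : ∀ k, pd (fun y => ∑ l, jac u y k l * 𝒰 y l) i x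
      = ∑ l, (pd (fun y => jac u y k l) i x * 𝒰 x l + jac u x k l * jac 𝒰 x l i) := fun k => by
    rw [pd_sum' i fun l => (da k l).fun_mul (dU l)]
    exact Finset.sum_congr rfl fun l _ => pd_mul' i (da k l) (dU l)
  rw [pd_sub' i ((dS.fun_mul (dU i)).fun_sub d3) d4, pd_sub' i (dS.fun_mul (dU i)) d3,
    pd_mul' i dS (dU i), pd_sum' i fun k => (dP i k).fun_mul (d1 k),
    pd_sum' i fun k => (dQ i k).fun_mul (d2 k),
    pd_sum' i fun k => DifferentiableAt.fun_sum fun l _ => (dP k l).fun_mul (db k l)]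
  congr 1
  · congr 1
    · congr 1
      congr 1
      refine Finset.sum_congr rfl fun k _ => ?_
      rw [pd_sum' i fun l => (dP k l).fun_mul (db k l)]
      exact Finset.sum_congr rfl fun l _ => pd_mul' i (dP k l) (db k l)
    · refine Finset.sum_congr rfl fun k _ => ?_
      rw [pd_mul' i (dP i k) (d1 k), e1]
  · refine Finset.sum_congr rfl fun k _ => ?_
    rw [pd_mul' i (dQ i k) (d2 k), e2]
end

section
/- Define, for γ > 0 and ν, ν' ∈ ℝ, g_γ(ν, ν') = (3γ⁵ + (1−4ν)γ³)·(1 + (3−4ν)(3−4ν')) + (4ν'−2)·{(3−4ν)·[(4ν−1)γ³ − 6γ⁵] + 15γ⁵ − 12νγ⁵ − 2γ³} − 4γ³(1−ν)(1−2ν')(3−4ν). Then for every γ with 2/3 ≤ γ² ≤ 1 and all ν, ν' ∈ [0, 1/2], one has g_γ(ν, ν') ≥ 0. -/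
/-- The coefficient `g_γ(ν, ν')` of the mixed term `μμ'` in the expansion of
`16r²(1−ν)πμ ∂Γ^R₃₃/∂x₃` for the Rongved bi-phase fundamental solution. -/
def gCoeff (γ ν ν' : ℝ) : ℝ :=
  (3 * γ ^ 5 + (1 - 4 * ν) * γ ^ 3) * (1 + (3 - 4 * ν) * (3 - 4 * ν'))
    + (4 * ν' - 2) *
        ((3 - 4 * ν) * ((4 * ν - 1) * γ ^ 3 - 6 * γ ^ 5)
          + 15 * γ ^ 5 - 12 * ν * γ ^ 5 - 2 * γ ^ 3)
    - 4 * γ ^ 3 * (1 - ν) * (1 - 2 * ν') * (3 - 4 * ν)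

/-- For `2/3 ≤ γ² ≤ 1` and `ν, ν' ∈ [0, 1/2]`, the mixed coefficient `g_γ(ν, ν')`
is nonnegative. -/
theorem gCoeff_nonneg (γ ν ν' : ℝ) (hγ : γ > 0)
    (hγ2 : 2 / 3 ≤ γ ^ 2) (hγ2' : γ ^ 2 ≤ 1)
    (hν : ν ∈ Set.Icc (0 : ℝ) (1 / 2)) (hν' : ν' ∈ Set.Icc (0 : ℝ) (1 / 2)) :
    gCoeff γ ν ν' ≥ 0 := by
  obtain ⟨h1, h2⟩ := hν
  obtain ⟨h3, h4⟩ := hν'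
  have key : gCoeff γ ν ν' = γ ^ 3 *
      (2 * ν' * ((3 * (γ ^ 2 - 2 / 3) + (3 - 4 * ν)) * (4 - 4 * ν))
        + (1 - 2 * ν') * ((γ ^ 2 - 2 / 3) * (36 - 60 * ν)
            + 4 * ((2 - 4 * ν) * (4 - 4 * ν)))) := by
    unfold gCoeff
    ring
  rw [key]
  have e1 : 0 ≤ γ ^ 2 - 2 / 3 := by linarith
  have e2 : 0 ≤ 3 - 4 * ν := by linarith
  have e3 : 0 ≤ 4 - 4 * ν := by linarith
  have e4 : 0 ≤ 1 - 2 * ν' := by linarith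
  have e5 : 0 ≤ 36 - 60 * ν := by linarith
  have e6 : 0 ≤ 2 - 4 * ν := by linarith
  have f1 : 0 ≤ (3 * (γ ^ 2 - 2 / 3) + (3 - 4 * ν)) * (4 - 4 * ν) :=
    mul_nonneg (by linarith) e3
  have f2 : 0 ≤ (γ ^ 2 - 2 / 3) * (36 - 60 * ν) + 4 * ((2 - 4 * ν) * (4 - 4 * ν)) := by
    have := mul_nonneg e1 e5
    have := mul_nonneg e6 e3
    linarith
  have f3 := mul_nonneg (mul_nonneg (by norm_num : (0 : ℝ) ≤ 2) h3) f1
  have f4 := mul_nonneg e4 f2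
  exact mul_nonneg (pow_nonneg hγ.le 3) (by linarith)
end

section
/- For every ν ∈ [0, 1/2] and every γ with √(2/3) ≤ γ ≤ 1, one has 4γ³·(2 − 8ν + 3γ² − 6νγ² + 8ν²) ≥ (32√2/(3√3))·(1−ν)(1−2ν). -/
/-- Lower bound on the coefficient `B` of `(μ')²` in the expansion of
`16r²(1−ν)πμ ∂Γ^R₃₃/∂x₃`: for `ν ∈ [0, 1/2]` and `√(2/3) ≤ γ ≤ 1`,
`4γ³(2 − 8ν + 3γ² − 6νγ² + 8ν²) ≥ (32√2/(3√3))(1−ν)(1−2ν)`. -/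
theorem B_coeff_lower_bound (ν γ : ℝ)
    (hν : ν ∈ Set.Icc (0 : ℝ) (1 / 2))
    (hγ : Real.sqrt (2 / 3) ≤ γ) (hγ1 : γ ≤ 1) :
    4 * γ ^ 3 * (2 - 8 * ν + 3 * γ ^ 2 - 6 * ν * γ ^ 2 + 8 * ν ^ 2)
      ≥ (32 * Real.sqrt 2 / (3 * Real.sqrt 3)) * (1 - ν) * (1 - 2 * ν) := by
  obtain ⟨h0, h1⟩ := hν
  have hs : Real.sqrt (2 / 3) = Real.sqrt 2 / Real.sqrt 3 := Real.sqrt_div (by norm_num) 3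
  have hc : 32 * Real.sqrt 2 / (3 * Real.sqrt 3) = 32 / 3 * Real.sqrt (2 / 3) := by
    rw [hs]; field_simp
  rw [hc]
  have hsq : Real.sqrt (2 / 3) ^ 2 = 2 / 3 := Real.sq_sqrt (by norm_num)
  have hnn : 0 ≤ Real.sqrt (2 / 3) := Real.sqrt_nonneg _
  generalize Real.sqrt (2 / 3) = s at *
  have hg2 : 2 / 3 ≤ γ ^ 2 := by rw [← hsq]; gcongr
  have hg3 : 2 / 3 * s ≤ γ ^ 3 := by
    have : s ^ 3 ≤ γ ^ 3 := by gcongr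
    calc 2 / 3 * s = s ^ 3 := by rw [← hsq]; ring
      _ ≤ _ := this
  have ha : 0 ≤ 1 - 2 * ν := by linarith
  have hb : 0 ≤ 1 - ν := by linarith
  have hin : 4 * ((1 - ν) * (1 - 2 * ν)) ≤ 2 - 8 * ν + 3 * γ ^ 2 - 6 * ν * γ ^ 2 + 8 * ν ^ 2 := by
    have := mul_nonneg ha (sub_nonneg.2 hg2)
    linarith
  have hp : 0 ≤ 4 * ((1 - ν) * (1 - 2 * ν)) := by positivity
  have hg0 : 0 ≤ γ ^ 3 := le_trans (by positivity) hg3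
  have := mul_le_mul hg3 hin hp hg0
  linarith
end

section
/- Define, for γ > 0 and ν, ν' ∈ ℝ: A(γ,ν,ν') = 4νγ³(3−4ν')(3−2ν), B(γ,ν) = 4γ³(2 − 8ν + 3γ² − 6νγ² + 8ν²), and C(γ,ν,ν') = (3γ⁵ + (1−4ν)γ³)·(1 + (3−4ν)(3−4ν')) + (4ν'−2)·{(3−4ν)·[(4ν−1)γ³ − 6γ⁵] + 15γ⁵ − 12νγ⁵ − 2γ³} − 4γ³(1−ν)(1−2ν')(3−4ν). Then for all ν, ν' ∈ [0, 1/2], every γ with √(2/3) ≤ γ ≤ 1, and all μ ≥ 0, μ' ≥ 0, one has A(γ,ν,ν')·μ² + B(γ,ν)·(μ')² + C(γ,ν,ν')·μμ' ≥ (32√2/(3√3))·(1−ν)(1−2ν)·(μ')². -/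
/-- Coefficient of `μ²` in the quadratic form expansion of
`16r²(1−ν)πμ ∂Γ^R₃₃/∂x₃`. -/
def Acoeff (γ ν ν' : ℝ) : ℝ := 4 * ν * γ ^ 3 * (3 - 4 * ν') * (3 - 2 * ν)

/-- Coefficient of `(μ')²`. -/
def Bcoeff (γ ν : ℝ) : ℝ := 4 * γ ^ 3 * (2 - 8 * ν + 3 * γ ^ 2 - 6 * ν * γ ^ 2 + 8 * ν ^ 2)

/-- Coefficient of the mixed term `μμ'`. -/
def Ccoeff (γ ν ν' : ℝ) : ℝ :=
  (3 * γ ^ 5 + (1 - 4 * ν) * γ ^ 3) * (1 + (3 - 4 * ν) * (3 - 4 * ν'))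
    + (4 * ν' - 2) *
        ((3 - 4 * ν) * ((4 * ν - 1) * γ ^ 3 - 6 * γ ^ 5)
          + 15 * γ ^ 5 - 12 * ν * γ ^ 5 - 2 * γ ^ 3)
    - 4 * γ ^ 3 * (1 - ν) * (1 - 2 * ν') * (3 - 4 * ν)

/-- Lower bound on the quadratic form `Aμ² + B(μ')² + Cμμ'`: for `ν, ν' ∈ [0, 1/2]`,
`√(2/3) ≤ γ ≤ 1` and `μ, μ' ≥ 0`, it is at least `(32√2/(3√3))(1−ν)(1−2ν)(μ')²`. -/
theorem quadratic_form_lower_bound (γ ν ν' μ μ' : ℝ)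
    (hν : ν ∈ Set.Icc (0 : ℝ) (1 / 2)) (hν' : ν' ∈ Set.Icc (0 : ℝ) (1 / 2))
    (hγ : Real.sqrt (2 / 3) ≤ γ) (hγ1 : γ ≤ 1)
    (hμ : 0 ≤ μ) (hμ' : 0 ≤ μ') :
    Acoeff γ ν ν' * μ ^ 2 + Bcoeff γ ν * μ' ^ 2 + Ccoeff γ ν ν' * (μ * μ')
      ≥ (32 * Real.sqrt 2 / (3 * Real.sqrt 3)) * (1 - ν) * (1 - 2 * ν) * μ' ^ 2 := by
  obtain ⟨h0, h1⟩ := hν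
  obtain ⟨h0', h1'⟩ := hν'
  set s := Real.sqrt (2 / 3) with hs
  have hs0 : 0 < s := Real.sqrt_pos.mpr (by norm_num)
  have hs2 : s ^ 2 = 2 / 3 := Real.sq_sqrt (by norm_num)
  have hg0 : 0 < γ := lt_of_lt_of_le hs0 hγ
  have hg : 2 / 3 ≤ γ ^ 2 := by rw [← hs2]; gcongr
  have hg3 : s ^ 3 ≤ γ ^ 3 := by gcongr
  have hp : 0 ≤ γ ^ 3 := by positivity
  have hK : 32 * Real.sqrt 2 / (3 * Real.sqrt 3) = 16 * s ^ 3 := by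
    have e : s ^ 3 = 2 / 3 * s := by rw [pow_succ, hs2]
    rw [e, hs, Real.sqrt_div (by norm_num)]
    have : Real.sqrt 3 ≠ 0 := by positivity
    field_simp
    norm_num
  have hA : 0 ≤ Acoeff γ ν ν' := by
    unfold Acoeff
    have a1 : 0 ≤ 3 - 4 * ν' := by linarith
    have a2 : 0 ≤ 3 - 2 * ν := by linarith
    positivity
  have hP : 0 ≤ (1 - ν) * (1 - 2 * ν) := mul_nonneg (by linarith) (by linarith)
  have hB : 16 * s ^ 3 * ((1 - ν) * (1 - 2 * ν)) ≤ Bcoeff γ ν := by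
    have b1 : 16 * s ^ 3 * ((1 - ν) * (1 - 2 * ν)) ≤ 16 * γ ^ 3 * ((1 - ν) * (1 - 2 * ν)) := by
      gcongr
    have b2 : 0 ≤ γ ^ 3 * ((1 - 2 * ν) * (3 * γ ^ 2 - 2)) :=
      mul_nonneg hp (mul_nonneg (by linarith) (by linarith))
    unfold Bcoeff
    nlinarith
  have hC : 0 ≤ Ccoeff γ ν ν' := by
    have e : Ccoeff γ ν ν' = γ ^ 3 * (2 * ν' * ((3 * γ ^ 2 - 2 + (3 - 4 * ν)) * (4 - 4 * ν))
        + (1 - 2 * ν') * ((3 * γ ^ 2 - 2) * ((4 - 4 * ν) + 4 * (2 - 4 * ν))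
          + 4 * (4 - 4 * ν) * (2 - 4 * ν))) := by
      unfold Ccoeff; ring
    rw [e]
    have c1 : 0 ≤ 3 * γ ^ 2 - 2 := by linarith
    have c2 : 0 ≤ 3 - 4 * ν := by linarith
    have c3 : 0 ≤ 4 - 4 * ν := by linarith
    have c4 : 0 ≤ 2 - 4 * ν := by linarith
    have c5 : 0 ≤ 1 - 2 * ν' := by linarith
    positivity
  rw [hK]
  have t1 := mul_nonneg hA (sq_nonneg μ)
  have t2 := mul_le_mul_of_nonneg_right hB (sq_nonneg μ')
  have t3 := mul_nonneg hC (mul_nonneg hμ hμ')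
  linarith
end

section
/- Let n ≥ 1, let M ≥ 0, and let 𝒰 : ℝⁿ → ℝⁿ be a continuous map such that ‖𝒰(x)‖ ≤ M for all x ∈ ℝⁿ. Then the map Φ(x) = x + 𝒰(x) is surjective; more precisely, for every y ∈ ℝⁿ there exists x ∈ ℝⁿ with ‖x − y‖ ≤ M and Φ(x) = y. -/
open MeasureTheory Set Metric Polynomial Topology

lemma bw_poly (n : ℕ) (A : EuclideanSpace ℝ (Fin n) →L[ℝ] EuclideanSpace ℝ (Fin n))
    (w v : EuclideanSpace ℝ (Fin n)) (c : ℝ) (N : ℕ) :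
    ∃ p : ℝ[X], p.natDegree ≤ N * 2 + n ∧ ∀ t : ℝ,
      p.eval t = (1 - c * ‖w + t • v‖ ^ 2) ^ N *
        (ContinuousLinearMap.id ℝ (EuclideanSpace ℝ (Fin n)) + t • A).det := by
  let b := (EuclideanSpace.basisFun (Fin n) ℝ).toBasis
  let m : Matrix (Fin n) (Fin n) ℝ := LinearMap.toMatrix b b (A : _ →ₗ[ℝ] _)
  let q : ℝ[X] := C (1 - c * ‖w‖ ^ 2) + C (- (2 * c * inner ℝ w v)) * X +
    C (- (c * ‖v‖ ^ 2)) * X ^ 2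
  let d : ℝ[X] := Matrix.det ((X : ℝ[X]) • m.map C + (1 : Matrix (Fin n) (Fin n) ℝ).map C)
  refine ⟨q ^ N * d, ?_, ?_⟩
  · refine natDegree_mul_le.trans (add_le_add ?_ ?_)
    · refine natDegree_pow_le.trans (Nat.mul_le_mul_left _ ?_)
      simp only [q]
      compute_degree
    · exact (natDegree_det_X_add_C_le m 1).trans (by simp)
  · intro t
    rw [eval_mul, eval_pow]
    congr 1
    · congr 1
      simp only [q, eval_add, eval_mul, eval_C, eval_X, eval_pow]
      rw [norm_add_sq_real, inner_smul_right, norm_smul, mul_pow, Real.norm_eq_abs, sq_abs]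
      ring
    · simp only [d]
      rw [← coe_evalRingHom, RingHom.map_det, ContinuousLinearMap.det, ← LinearMap.det_toMatrix b]
      congr 1
      have : ((ContinuousLinearMap.id ℝ (EuclideanSpace ℝ (Fin n)) + t • A :
          EuclideanSpace ℝ (Fin n) →L[ℝ] EuclideanSpace ℝ (Fin n)) :
          EuclideanSpace ℝ (Fin n) →ₗ[ℝ] EuclideanSpace ℝ (Fin n)) =
          LinearMap.id + t • (A : _ →ₗ[ℝ] _) := rfl
      rw [this, LinearEquiv.map_add, LinearEquiv.map_smul, LinearMap.toMatrix_id, add_comm]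
      ext i j
      by_cases hij : i = j <;> simp [m, Matrix.map_apply, hij] <;> exact mul_comm _ _

lemma bw_det_pos (n : ℕ) (A : EuclideanSpace ℝ (Fin n) →L[ℝ] EuclideanSpace ℝ (Fin n))
    (t : ℝ) (ht : 0 ≤ t) (hA : t * ‖A‖ < 1) :
    0 < (ContinuousLinearMap.id ℝ (EuclideanSpace ℝ (Fin n)) + t • A).det := by
  have hne : ∀ s ∈ Icc 0 t,
      (ContinuousLinearMap.id ℝ (EuclideanSpace ℝ (Fin n)) + s • A).det ≠ 0 := by
    intro s hs h0
    have hs' : s * ‖A‖ < 1 :=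
      (mul_le_mul_of_nonneg_right hs.2 (norm_nonneg _)).trans_lt hA
    rw [ContinuousLinearMap.det] at h0
    have hlt := LinearMap.bot_lt_ker_of_det_eq_zero h0
    obtain ⟨x, hx, hx0⟩ := (Submodule.ne_bot_iff _).1 hlt.ne'
    have hx' : x + s • A x = 0 := by simpa using hx
    have h1 : ‖x‖ = s * ‖A x‖ := by
      have h4 := congrArg norm (eq_neg_of_add_eq_zero_left hx')
      rwa [norm_neg, norm_smul, Real.norm_of_nonneg hs.1] at h4
    have h2 : s * ‖A x‖ ≤ s * (‖A‖ * ‖x‖) := mul_le_mul_of_nonneg_left (A.le_opNorm x) hs.1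
    have h3 : 0 < ‖x‖ := norm_pos_iff.2 hx0
    nlinarith
  have hc : ContinuousOn (fun s : ℝ =>
      (ContinuousLinearMap.id ℝ (EuclideanSpace ℝ (Fin n)) + s • A).det) (Icc 0 t) := by
    apply Continuous.continuousOn
    exact ContinuousLinearMap.continuous_det.comp (by fun_prop)
  by_contra hcon
  push Not at hcon
  have h1 : (ContinuousLinearMap.id ℝ (EuclideanSpace ℝ (Fin n)) + (0:ℝ) • A).det = 1 := by
    simp [ContinuousLinearMap.det]
  obtain ⟨s, hs, hs0⟩ := intermediate_value_Icc' ht hc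
    (show (0:ℝ) ∈ _ from ⟨hcon, by simp only [h1]; exact zero_le_one⟩)
  exact hne s hs hs0

lemma bw_small (n : ℕ) (V : EuclideanSpace ℝ (Fin n) → EuclideanSpace ℝ (Fin n))
    (hV : ContDiff ℝ 1 V) (y : EuclideanSpace ℝ (Fin n)) (R : ℝ)
    (hsupp : ∀ x, x ∉ closedBall y R → V x = 0) (L : NNReal) (hL : LipschitzWith L V)
    (g : EuclideanSpace ℝ (Fin n) → ℝ) (t : ℝ) (ht : 0 ≤ t) (htL : t * L < 1) :
    ∫ x in closedBall y R, g (x + t • V x) *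
        (ContinuousLinearMap.id ℝ (EuclideanSpace ℝ (Fin n)) + t • fderiv ℝ V x).det
      = ∫ x in closedBall y R, g x := by
  let F : EuclideanSpace ℝ (Fin n) → EuclideanSpace ℝ (Fin n) := fun x => x + t • V x
  have hinj : Function.Injective F := by
    intro a b hab
    have h1 : a - b = t • (V b - V a) := by
      simp only [F] at hab
      rw [smul_sub, sub_eq_sub_iff_add_eq_add, hab, add_comm]
    have h2 : ‖a - b‖ ≤ t * (L * ‖a - b‖) := by
      conv_lhs => rw [h1, norm_smul, Real.norm_of_nonneg ht]
      apply mul_le_mul_of_nonneg_left _ ht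
      rw [← dist_eq_norm, ← dist_eq_norm, dist_comm a b]
      exact hL.dist_le_mul b a
    by_contra hne
    have h3 : 0 < ‖a - b‖ := norm_pos_iff.2 (sub_ne_zero.2 hne)
    nlinarith
  have hsurj : Function.Surjective F := by
    intro z
    have hlip : LipschitzWith (t.toNNReal * L) (fun x => z - t • V x) := by
      apply LipschitzWith.of_dist_le_mul
      intro a b
      rw [dist_sub_left, dist_eq_norm, ← smul_sub, norm_smul, Real.norm_of_nonneg ht,
        ← dist_eq_norm]
      have := mul_le_mul_of_nonneg_left (hL.dist_le_mul a b) ht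
      rw [NNReal.coe_mul, Real.coe_toNNReal t ht, mul_assoc]
      exact this
    have hcw : ContractingWith (t.toNNReal * L) (fun x => z - t • V x) := by
      refine ⟨?_, hlip⟩
      rw [← NNReal.coe_lt_coe]
      rw [NNReal.coe_mul, Real.coe_toNNReal t ht]
      exact htL
    have hfix := hcw.fixedPoint_isFixedPt
    refine ⟨ContractingWith.fixedPoint _ hcw, ?_⟩
    simp only [F]
    have h2 := hfix.eq
    exact (sub_eq_iff_eq_add.1 h2).symm
  have himg : F '' closedBall y R = closedBall y R := by
    have hid : ∀ x, x ∉ closedBall y R → F x = x := by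
      intro x hx
      simp [F, hsupp x hx]
    ext z
    constructor
    · rintro ⟨x, hx, rfl⟩
      by_contra hz
      have := hinj (hid _ hz)
      rw [this] at hz
      exact hz hx
    · intro hz
      obtain ⟨x, rfl⟩ := hsurj z
      refine ⟨x, ?_, rfl⟩
      by_contra hx
      rw [hid x hx] at hz
      exact hx hz
  have hcv := integral_image_eq_integral_abs_det_fderiv_smul (volume) (s := closedBall y R)
    (f := F)
    (f' := fun x => ContinuousLinearMap.id ℝ (EuclideanSpace ℝ (Fin n)) + t • fderiv ℝ V x)
    measurableSet_closedBall
    (fun x _ => ((hasFDerivAt_id x).add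
      (((hV.differentiable (by simp)) x).hasFDerivAt.const_smul t)).hasFDerivWithinAt)
    hinj.injOn g
  rw [himg] at hcv
  rw [hcv]
  congr 1
  ext x
  have hn : ‖fderiv ℝ V x‖ ≤ L := norm_fderiv_le_of_lipschitz ℝ hL
  have := bw_det_pos n (fderiv ℝ V x) t ht
    ((mul_le_mul_of_nonneg_left hn ht).trans_lt htL)
  rw [abs_of_pos this, smul_eq_mul, mul_comm]

lemma bw_one (n : ℕ) (V : EuclideanSpace ℝ (Fin n) → EuclideanSpace ℝ (Fin n))
    (hV : ContDiff ℝ 1 V) (y : EuclideanSpace ℝ (Fin n)) (R : ℝ)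
    (hsupp : ∀ x, x ∉ closedBall y R → V x = 0) (L : NNReal) (hL : LipschitzWith L V)
    (c : ℝ) (N : ℕ) :
    ∫ x in closedBall y R, (1 - c * ‖x + V x - y‖ ^ 2) ^ N *
        (ContinuousLinearMap.id ℝ (EuclideanSpace ℝ (Fin n)) + fderiv ℝ V x).det
      = ∫ x in closedBall y R, (1 - c * ‖x - y‖ ^ 2) ^ N := by
  let f : ℝ → EuclideanSpace ℝ (Fin n) → ℝ := fun t x => (1 - c * ‖x + t • V x - y‖ ^ 2) ^ N *
        (ContinuousLinearMap.id ℝ (EuclideanSpace ℝ (Fin n)) + t • fderiv ℝ V x).det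
  let s : Finset ℕ := Finset.range (N * 2 + n + 1)
  let v : ℕ → ℝ := fun i => 1 / ((L + 1) * (i + 1))
  have hLp : (0:ℝ) < L + 1 := by positivity
  have hv : Set.InjOn v s := by
    intro i _ j _ hij
    simp only [v] at hij
    have h1 : ((L:ℝ) + 1) * (i + 1) = (L + 1) * (j + 1) := by
      rw [one_div, one_div] at hij
      exact inv_injective hij
    have h2 := mul_left_cancel₀ hLp.ne' h1
    exact_mod_cast add_right_cancel h2
  have hv0 : ∀ i, 0 ≤ v i := fun i => by simp only [v]; positivity
  have hv1 : ∀ i, v i * L < 1 := fun i => by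
    simp only [v]
    rw [one_div, inv_mul_lt_iff₀ (by positivity)]
    have : (0:ℝ) ≤ i := by positivity
    have : (0:ℝ) ≤ L := L.2
    nlinarith
  have hsum : ∀ x, f 1 x = ∑ i ∈ s, f (v i) x * (Lagrange.basis s v i).eval 1 := by
    intro x
    obtain ⟨p, hp, hpe⟩ := bw_poly n (fderiv ℝ V x) (x - y) (V x) c N
    have hf : ∀ t, f t x = p.eval t := by
      intro t
      rw [hpe]
      simp only [f]
      rw [show x + t • V x - y = x - y + t • V x by abel]
    have hdeg : p.degree < s.card := by
      refine lt_of_le_of_lt degree_le_natDegree ?_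
      simp only [s, Finset.card_range]
      exact_mod_cast Nat.lt_succ_of_le hp
    have := congrArg (eval 1) (Lagrange.eq_interpolate hv hdeg)
    rw [hf, this, Lagrange.interpolate_apply, eval_finsetSum]
    refine Finset.sum_congr rfl fun i _ => ?_
    rw [eval_mul, eval_C, hf]
  have hint : ∀ t, IntegrableOn (f t) (closedBall y R) := by
    intro t
    refine ContinuousOn.integrableOn_compact (isCompact_closedBall y R) (Continuous.continuousOn ?_)
    have h1 := hV.continuous
    have h2 := hV.continuous_fderiv (by simp)
    have h3 : Continuous fun x =>
      (ContinuousLinearMap.id ℝ (EuclideanSpace ℝ (Fin n)) + t • fderiv ℝ V x).det :=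
      ContinuousLinearMap.continuous_det.comp (by fun_prop)
    simp only [f]
    fun_prop
  have hone : ∑ i ∈ s, (Lagrange.basis s v i).eval 1 = 1 := by
    rw [← eval_finsetSum, Lagrange.sum_basis hv ⟨0, by simp [s]⟩, eval_one]
  have key : ∫ x in closedBall y R, f 1 x
      = ∫ x in closedBall y R, (1 - c * ‖x - y‖ ^ 2) ^ N := by
    simp_rw [hsum]
    rw [integral_finsetSum _ (fun i _ => (hint (v i)).mul_const _)]
    simp_rw [integral_mul_const]
    have : ∀ i ∈ s, (∫ x in closedBall y R, f (v i) x) * (Lagrange.basis s v i).eval 1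
        = (∫ x in closedBall y R, (1 - c * ‖x - y‖ ^ 2) ^ N) * (Lagrange.basis s v i).eval 1 := by
      intro i _
      congr 1
      exact bw_small n V hV y R hsupp L hL (fun z => (1 - c * ‖z - y‖ ^ 2) ^ N) (v i)
        (hv0 i) (hv1 i)
    rw [Finset.sum_congr rfl this, ← Finset.mul_sum, hone, mul_one]
  simpa [f] using key

lemma bw_smooth (n : ℕ) (V : EuclideanSpace ℝ (Fin n) → EuclideanSpace ℝ (Fin n))
    (hV : ContDiff ℝ 1 V) (hc : HasCompactSupport V) (y : EuclideanSpace ℝ (Fin n)) :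
    ∃ x, x + V x = y := by
  by_contra hcon
  push Not at hcon
  obtain ⟨L, hL⟩ := hV.lipschitzWith_of_hasCompactSupport hc (by simp)
  obtain ⟨B, hB⟩ := hc.exists_bound_of_continuous hV.continuous
  have hB0 : 0 ≤ B := (norm_nonneg _).trans (hB y)
  obtain ⟨R, hR0, hR⟩ := hc.isCompact.isBounded.subset_closedBall_lt 0 y
  have hsupp : ∀ x, x ∉ closedBall y R → V x = 0 := fun x hx =>
    image_eq_zero_of_notMem_tsupport fun h => hx (hR h)
  have hVc := hV.continuous
  have hdc : Continuous fun x =>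
      (ContinuousLinearMap.id ℝ (EuclideanSpace ℝ (Fin n)) + fderiv ℝ V x).det := by
    have h2 := hV.continuous_fderiv (by simp)
    exact ContinuousLinearMap.continuous_det.comp (by fun_prop)
  obtain ⟨x0, hx0, hmin⟩ := (isCompact_closedBall y R).exists_isMinOn
    ⟨y, mem_closedBall_self hR0.le⟩
    (f := fun x => ‖x + V x - y‖) (by fun_prop)
  obtain ⟨D, hD⟩ := (isCompact_closedBall y R).exists_bound_of_continuousOn hdc.continuousOn
  set δ := min ‖x0 + V x0 - y‖ R with hδ
  have hδ0 : 0 < δ := lt_min (norm_pos_iff.2 (sub_ne_zero.2 (hcon x0))) hR0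
  have hδR : δ ≤ R := min_le_right _ _
  have hδm : ∀ x ∈ closedBall y R, δ ≤ ‖x + V x - y‖ := fun x hx =>
    (min_le_left _ _).trans (hmin hx)
  have hD0 : 0 ≤ D := (norm_nonneg _).trans (hD x0 hx0)
  set S := R + B + 1 with hS
  have hS0 : 0 < S := by positivity
  set c := 1 / S ^ 2 with hcdef
  have hc0 : 0 < c := by positivity
  have hcS : c * S ^ 2 = 1 := by rw [hcdef]; field_simp
  have hle : ∀ r, 0 ≤ r → r ≤ S → 0 ≤ 1 - c * r ^ 2 := by
    intro r h0 h1
    have : c * r ^ 2 ≤ c * S ^ 2 := by gcongr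
    linarith
  set a := 1 - c * δ ^ 2 with ha
  set b := 1 - c * (δ / 2) ^ 2 with hb
  have ha0 : 0 ≤ a := hle δ hδ0.le (by linarith)
  have hab : a < b := by
    have : 0 < c * δ ^ 2 := by positivity
    rw [ha, hb]
    nlinarith
  have hb0 : 0 < b := ha0.trans_lt hab
  set vol1 := volume.real (closedBall y R) with hvol1
  set vol2 := volume.real (closedBall y (δ / 2)) with hvol2
  have hvol2p : 0 < vol2 := by
    refine ENNReal.toReal_pos ?_ (isCompact_closedBall y _).measure_lt_top.ne
    exact (measure_closedBall_pos volume y (by positivity)).ne'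
  have key : ∀ N : ℕ, b ^ N * vol2 ≤ a ^ N * D * vol1 := by
    intro N
    have hlow : b ^ N * vol2 ≤ ∫ x in closedBall y R, (1 - c * ‖x - y‖ ^ 2) ^ N := by
      have hcont : Continuous fun x : EuclideanSpace ℝ (Fin n) => (1 - c * ‖x - y‖ ^ 2) ^ N := by
        fun_prop
      calc b ^ N * vol2 = ∫ x in closedBall y (δ / 2), b ^ N := by
            rw [setIntegral_const, smul_eq_mul, mul_comm]
        _ ≤ ∫ x in closedBall y (δ / 2), (1 - c * ‖x - y‖ ^ 2) ^ N := by
            refine setIntegral_mono_on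
              (continuous_const.continuousOn.integrableOn_compact (isCompact_closedBall _ _))
              (hcont.continuousOn.integrableOn_compact (isCompact_closedBall _ _))
              measurableSet_closedBall fun x hx => ?_
            have hx' : ‖x - y‖ ≤ δ / 2 := by rwa [← dist_eq_norm]
            simp only [hb]
            refine pow_le_pow_left₀ hb0.le ?_ N
            rw [hb]
            gcongr
        _ ≤ _ := by
            refine setIntegral_mono_set
              (hcont.continuousOn.integrableOn_compact (isCompact_closedBall _ _)) ?_ ?_
            · refine (ae_restrict_iff' measurableSet_closedBall).2 (Filter.Eventually.of_forall ?_)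
              intro x hx
              have hx' : ‖x - y‖ ≤ R := by rwa [← dist_eq_norm]
              exact pow_nonneg (hle _ (norm_nonneg _) (by linarith)) N
            · exact (closedBall_subset_closedBall (by linarith)).eventuallyLE
    rw [← bw_one n V hV y R hsupp L hL c N] at hlow
    refine hlow.trans ((le_abs_self _).trans ?_)
    rw [← Real.norm_eq_abs]
    refine norm_setIntegral_le_of_norm_le_const (isCompact_closedBall y R).measure_lt_top ?_
    intro x hx
    have hx' : ‖x - y‖ ≤ R := by rwa [← dist_eq_norm]
    have h1 : ‖x + V x - y‖ ≤ S := by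
      have : x + V x - y = (x - y) + V x := by abel
      rw [this]
      have := norm_add_le (x - y) (V x)
      have := hB x
      linarith
    have h2 := hle _ (norm_nonneg _) h1
    rw [norm_mul, norm_pow, Real.norm_of_nonneg h2]
    refine mul_le_mul (pow_le_pow_left₀ h2 ?_ N) (hD x hx) (norm_nonneg _) (pow_nonneg ha0 N)
    rw [ha]
    have := hδm x hx
    gcongr
  have hlim : Filter.Tendsto (fun N : ℕ => (a / b) ^ N * (D * vol1)) Filter.atTop (𝓝 0) := by
    have := (tendsto_pow_atTop_nhds_zero_of_lt_one (div_nonneg ha0 hb0.le)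
      ((div_lt_one hb0).2 hab)).mul_const (D * vol1)
    simpa using this
  have : vol2 ≤ 0 := by
    refine ge_of_tendsto' hlim fun N => ?_
    rw [div_pow, div_mul_eq_mul_div, le_div_iff₀ (pow_pos hb0 N)]
    have := key N
    linarith
  linarith


/-- A bounded continuous perturbation of the identity on `ℝⁿ` is surjective: if
`‖𝒰(x)‖ ≤ M` for all `x`, then for every `y` there is `x` with `‖x − y‖ ≤ M` and
`x + 𝒰(x) = y`. -/
theorem perturbed_identity_surjective (n : ℕ) (hn : 1 ≤ n) (M : ℝ) (hM : 0 ≤ M)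
    (𝒰 : EuclideanSpace ℝ (Fin n) → EuclideanSpace ℝ (Fin n))
    (hcont : Continuous 𝒰) (hbound : ∀ x, ‖𝒰 x‖ ≤ M) :
    ∀ y : EuclideanSpace ℝ (Fin n), ∃ x, ‖x - y‖ ≤ M ∧ x + 𝒰 x = y := by
  intro y
  suffices h : ∃ x, x + 𝒰 x = y by
    obtain ⟨x, hx⟩ := h
    refine ⟨x, ?_, hx⟩
    have : x - y = - 𝒰 x := by rw [← hx]; abel
    rw [this, norm_neg]
    exact hbound x
  have happ : ∀ ε : ℝ, 0 < ε → ε ≤ 1 →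
      ∃ x ∈ closedBall y (M + 1), ‖x + 𝒰 x - y‖ ≤ ε := by
    intro ε hε hε1
    obtain ⟨f, hf, hfa, -⟩ := hcont.exists_contDiff_approx 1 (ε := fun _ => ε)
      continuous_const (fun _ => hε)
    let χ : ContDiffBump y := ⟨M + 1, M + 2, by linarith, by linarith⟩
    have hfb : ∀ x, ‖f x - 𝒰 x‖ ≤ ε := fun x => by
      rw [← dist_eq_norm]; exact (hfa x).le
    have hVd : ContDiff ℝ 1 (fun x => χ x • f x) := χ.contDiff.smul hf
    have hVc : HasCompactSupport (fun x => χ x • f x) := χ.hasCompactSupport.smul_right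
    obtain ⟨x, hx⟩ := bw_smooth n _ hVd hVc y
    have hfn : ‖f x‖ ≤ M + 1 := by
      have h1 := norm_add_le (f x - 𝒰 x) (𝒰 x)
      rw [sub_add_cancel] at h1
      linarith [hfb x, hbound x]
    have hxm : x ∈ closedBall y (M + 1) := by
      rw [mem_closedBall, dist_eq_norm]
      have : x - y = - (χ x • f x) := by
        rw [sub_eq_iff_eq_add, neg_add_eq_sub]
        exact (eq_sub_of_add_eq hx)
      rw [this, norm_neg, norm_smul, Real.norm_of_nonneg χ.nonneg]
      have := χ.le_one (x := x)
      have := χ.nonneg (x := x)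
      nlinarith [norm_nonneg (f x)]
    have hone : χ x = 1 := χ.one_of_mem_closedBall hxm
    rw [hone, one_smul] at hx
    refine ⟨x, hxm, ?_⟩
    have : x + 𝒰 x - y = -(f x - 𝒰 x) := by
      rw [← hx]; abel
    rw [this, norm_neg]
    exact hfb x
  obtain ⟨x0, hx0, hmin⟩ := (isCompact_closedBall y (M + 1)).exists_isMinOn
    ⟨y, mem_closedBall_self (by linarith)⟩
    (f := fun x => ‖x + 𝒰 x - y‖) (by fun_prop)
  refine ⟨x0, ?_⟩
  by_contra hne
  have hpos : 0 < ‖x0 + 𝒰 x0 - y‖ := norm_pos_iff.2 (sub_ne_zero.2 hne)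
  obtain ⟨x, hx, hxe⟩ := happ (min (‖x0 + 𝒰 x0 - y‖ / 2) 1) (by positivity) (min_le_right _ _)
  have h1 : ‖x0 + 𝒰 x0 - y‖ ≤ ‖x + 𝒰 x - y‖ := hmin hx
  have h2 := hxe.trans (min_le_left _ _)
  linarith
end
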